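/- arXiv:2508.21667 — 2 statements merged into one kernel-verified Lean document; each statement's English description precedes it below -/
import Mathlib

section
/- Let m be a positive integer, s an integer with 1 ≤ s ≤ 2^m, A : Fin s → ℝ with A p > 0 for all p, α = ∑_{p<s} A p, and σ : Fin s → ℂ with ‖σ p‖ = 1 for all p. Suppose PREP is a unitary 2^m × 2^m matrix whose 0-th column has p-th entry σ p · √(A p)/√α for p < s and 0 for p ≥ s, and UNPREP is a unitary 2^m × 2^m matrix such that the p-th entry of UNPREP† e₀ is √(A p)/√α for p < s and 0 for p ≥ s. Then for any positive integer n and all i, j ∈ Fin 2^n, the unitary U = (UNPREP ⊗ I) · (PREP ⊗ I) on ℂ^(2^m) ⊗ ℂ² ⊗ ℂ^(2^n) satisfies ⟨e_{(0,0,i)}, U e_{(0,0,j)}⟩ = η · δ_{i,j}, where η = (∑_{p<s} σ p · A p)/α; that is, without the index-mapping oracle the block-encoded matrix is η times the identity. -/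
/-!
By the mixed-product property the product is `(UNPREP * PREP) ⊗ₖ 1`, so its entry at
`((0, 0, i), (0, 0, j))` is `(UNPREP * PREP) 0 0` times `δ_{i,j}`. The former is the sum over `p`
of row `0` of `UNPREP` against column `0` of `PREP`. Both vanish for `p ≥ s`, and for `p < s` the
product of the two entries is `σ p * (√(A p))² / (√α)² = σ p * A p / α`.
-/

open Matrix
open scoped Kronecker

/-- **Without the index-mapping oracle, the block-encoded matrix is `η` times the identity**,
where `η = (∑_{p<s} σ p * A p) / α`. -/
theorem block_encoding_without_oracle_diagonal
    (m s : ℕ) (hm : 0 < m) (hs1 : 1 ≤ s) (hs2 : s ≤ 2 ^ m)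
    (A : Fin s → ℝ) (hA : ∀ p, 0 < A p)
    (α : ℝ) (hα : α = ∑ p, A p)
    (σ : Fin s → ℂ) (hσ : ∀ p, ‖σ p‖ = 1)
    (PREP : Matrix (Fin (2 ^ m)) (Fin (2 ^ m)) ℂ)
    (hPREP : PREP ∈ Matrix.unitaryGroup (Fin (2 ^ m)) ℂ)
    (hPREPcol : ∀ p : Fin (2 ^ m), PREP p 0 =
      if h : (p : ℕ) < s then
        σ ⟨p, h⟩ * (Real.sqrt (A ⟨p, h⟩) : ℂ) / (Real.sqrt α : ℂ) else 0)
    (UNPREP : Matrix (Fin (2 ^ m)) (Fin (2 ^ m)) ℂ)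
    (hUNPREP : UNPREP ∈ Matrix.unitaryGroup (Fin (2 ^ m)) ℂ)
    (hUNPREPcol : ∀ p : Fin (2 ^ m), UNPREPᴴ.mulVec (Pi.single 0 1) p =
      if h : (p : ℕ) < s then ((Real.sqrt (A ⟨p, h⟩) : ℂ) / (Real.sqrt α : ℂ)) else 0) :
    ∀ (n : ℕ), 0 < n → ∀ i j : Fin (2 ^ n),
      ((UNPREP ⊗ₖ (1 : Matrix (Fin 2 × Fin (2 ^ n)) (Fin 2 × Fin (2 ^ n)) ℂ)) *
        (PREP ⊗ₖ (1 : Matrix (Fin 2 × Fin (2 ^ n)) (Fin 2 × Fin (2 ^ n)) ℂ)))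
          (0, 0, i) (0, 0, j)
        = ((∑ p, σ p * (A p : ℂ)) / (α : ℂ)) * (if i = j then 1 else 0) := by
  have hαpos : 0 < α := by
    rw [hα]
    exact Finset.sum_pos (fun p _ => hA p) ⟨⟨0, hs1⟩, Finset.mem_univ _⟩
  -- The entries of `UNPREP† e₀` are real, so conjugation gives the same values for row `0`.
  have hrow : ∀ p : Fin (2 ^ m), UNPREP 0 p =
      if h : (p : ℕ) < s then ((Real.sqrt (A ⟨p, h⟩) : ℂ) / (Real.sqrt α : ℂ)) else 0 := by
    intro p
    have h1 := hUNPREPcol p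
    rw [Matrix.mulVec_single_one, Matrix.col_apply, Matrix.conjTranspose_apply] at h1
    rw [← star_star (UNPREP 0 p), h1]
    split_ifs <;> simp
  have hentry : (UNPREP * PREP) 0 0 = (∑ p, σ p * (A p : ℂ)) / (α : ℂ) := by
    rw [Matrix.mul_apply, Finset.sum_div]
    symm
    apply Fintype.sum_of_injective (Fin.castLE hs2) (Fin.castLE_injective hs2)
    · intro p hp
      have hps : ¬ (p : ℕ) < s := fun h => hp ⟨⟨p, h⟩, rfl⟩
      simp [hrow, hps]
    · intro p
      have hAsq : (Real.sqrt (A p) : ℂ) * (Real.sqrt (A p) : ℂ) = (A p : ℂ) := by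
        exact_mod_cast Real.mul_self_sqrt (hA p).le
      have hαsq : (Real.sqrt α : ℂ) * (Real.sqrt α : ℂ) = (α : ℂ) := by
        exact_mod_cast Real.mul_self_sqrt hαpos.le
      have hp : ((Fin.castLE hs2 p : Fin (2 ^ m)) : ℕ) < s := p.isLt
      rw [hrow, hPREPcol, dif_pos hp, dif_pos hp]
      change _ = (Real.sqrt (A p) : ℂ) / (Real.sqrt α : ℂ) *
        (σ p * (Real.sqrt (A p) : ℂ) / (Real.sqrt α : ℂ))
      rw [div_mul_div_comm, hαsq, ← hAsq]
      ring
  intro n _ i j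
  rw [← Matrix.mul_kronecker_mul, Matrix.kroneckerMap_apply, hentry, one_mul]
  simp [Matrix.one_apply]
end

section
/- Let P ≥ 1 and 1 ≤ n < P. Let F ⊆ Fin P be a set of indices with |F| = P − n, and let S ⊆ (Fin P → Bool) be a set of control strings with |S| = 2^n such that all elements of S agree on every coordinate in F, with common values ã i for i ∈ F. Then the product over S (in any order) of the gates MCX(a) = |a⟩⟨a| ⊗ X + (1 − |a⟩⟨a|) ⊗ 1 equals the partially-controlled gate Q ⊗ X + (1 − Q) ⊗ 1, where Q = ∑_{b : Fin P → Bool, b i = ã i for all i ∈ F} |b⟩⟨b| is the orthogonal projector onto the subspace of control-register basis states agreeing with ã on F. (The factors commute, so the product is well defined.) -/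
/-!
Writing `p_a = |a⟩⟨a|`, each gate is `1 + p_a ⊗ (X - 1)`. The projectors `p_a` for distinct `a` are
mutually orthogonal, so all cross terms vanish when gates with distinct control strings are
multiplied, and the product over a duplicate-free list is `1 + (∑ p_a) ⊗ (X - 1)` in any order
(`prod_map_MCX`). The subcube of strings agreeing with `atil` on `F` has exactly `2 ^ n` elements
(`card_subcube`); as `S` lies in it and has the same cardinality, `S` is the whole subcube.
-/

open Matrix
open scoped Kronecker

/-- The rank-one orthogonal projector `|a⟩⟨a|` onto the computational basis state
indexed by the binary string `a : Fin P → Bool`. -/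
noncomputable def ketBraProj (P : ℕ) (a : Fin P → Bool) :
    Matrix (Fin P → Bool) (Fin P → Bool) ℂ :=
  Matrix.of fun x y => if x = a ∧ y = a then 1 else 0

/-- The Pauli-X matrix on one qubit. -/
noncomputable def pauliX : Matrix (Fin 2) (Fin 2) ℂ := !![0, 1; 1, 0]

/-- The multi-controlled-X gate with control string `a`:
`MCX a = |a⟩⟨a| ⊗ X + (1 - |a⟩⟨a|) ⊗ 1` on `ℂ^(2^P) ⊗ ℂ²`. -/
noncomputable def MCX (P : ℕ) (a : Fin P → Bool) :
    Matrix ((Fin P → Bool) × Fin 2) ((Fin P → Bool) × Fin 2) ℂ :=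
  ketBraProj P a ⊗ₖ pauliX + (1 - ketBraProj P a) ⊗ₖ 1

lemma ketBraProj_mul_of_ne {P : ℕ} {a b : Fin P → Bool} (h : a ≠ b) :
    ketBraProj P a * ketBraProj P b = 0 := by
  ext x y
  simp only [ketBraProj, Matrix.mul_apply, Matrix.of_apply, Matrix.zero_apply]
  refine Finset.sum_eq_zero fun z _ => ?_
  by_cases hz : z = a
  · have : z ≠ b := fun hb => h (hz.symm.trans hb)
    simp [this]
  · simp [hz]

/-- A controlled gate is the identity plus a correction that is linear in the control `Q`. -/
lemma controlled_eq {P : ℕ} (Q : Matrix (Fin P → Bool) (Fin P → Bool) ℂ) :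
    Q ⊗ₖ pauliX + (1 - Q) ⊗ₖ (1 : Matrix (Fin 2) (Fin 2) ℂ) = 1 + Q ⊗ₖ (pauliX - 1) := by
  rw [← Matrix.one_kronecker_one (m := Fin P → Bool) (n := Fin 2) (α := ℂ)]
  ext ⟨x, i⟩ ⟨y, j⟩
  simp only [Matrix.add_apply, Matrix.sub_apply, Matrix.kroneckerMap_apply]
  ring

lemma prod_map_MCX {P : ℕ} (l : List (Fin P → Bool)) (hl : l.Nodup) :
    (l.map (MCX P)).prod = 1 + (∑ b ∈ l.toFinset, ketBraProj P b) ⊗ₖ (pauliX - 1) := by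
  induction l with
  | nil => simp
  | cons a l ih =>
    obtain ⟨ha, hl⟩ := List.nodup_cons.mp hl
    have hcross : ketBraProj P a * ∑ b ∈ l.toFinset, ketBraProj P b = 0 := by
      rw [Finset.mul_sum]
      refine Finset.sum_eq_zero fun b hb => ketBraProj_mul_of_ne ?_
      rintro rfl
      exact ha (List.mem_toFinset.mp hb)
    rw [List.map_cons, List.prod_cons, ih hl, MCX, controlled_eq, List.toFinset_cons,
      Finset.sum_insert (by simpa using ha), Matrix.add_kronecker, add_mul, mul_add, mul_add,
      ← Matrix.mul_kronecker_mul, hcross, Matrix.zero_kronecker]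
    simp only [one_mul, mul_one, add_zero]
    abel

lemma card_subcube {P : ℕ} (F : Finset (Fin P)) (atil : Fin P → Bool) :
    (Finset.univ.filter fun b : Fin P → Bool => ∀ i ∈ F, b i = atil i).card
      = 2 ^ (P - F.card) := by
  -- The subcube is a product of singletons over `F` and of copies of `Bool` off `F`.
  have h : (Finset.univ.filter fun b : Fin P → Bool => ∀ i ∈ F, b i = atil i)
      = Fintype.piFinset fun i => if i ∈ F then {atil i} else Finset.univ := by
    ext b
    simp only [Finset.mem_filter, Finset.mem_univ, true_and, Fintype.mem_piFinset]
    refine forall_congr' fun i => ?_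
    by_cases hi : i ∈ F <;> simp [hi]
  rw [h, Fintype.card_piFinset]
  simp only [apply_ite Finset.card, Finset.card_singleton, Finset.card_univ, Fintype.card_bool]
  rw [Finset.prod_ite, Finset.prod_const_one, one_mul, Finset.prod_const, Finset.filter_not,
    Finset.filter_mem_eq_inter, Finset.univ_inter, Finset.card_sdiff_of_subset (Finset.subset_univ F),
    Finset.card_univ, Fintype.card_fin]

/-- **Composition of MCX gates over a subcube of control strings.**
If the `2^n` control strings of `S` all agree on the `P - n` coordinates of `F`
(with common values `atil i` for `i ∈ F`), then the product of the gates `MCX a`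
over `S`, in any order, equals the partially-controlled gate `Q ⊗ X + (1 - Q) ⊗ 1`,
where `Q` projects onto the basis states agreeing with `atil` on `F`. -/
theorem mcx_composition_subcube
    (P n : ℕ) (hP : 1 ≤ P) (hn : 1 ≤ n) (hnP : n < P)
    (F : Finset (Fin P)) (hF : F.card = P - n)
    (S : Finset (Fin P → Bool)) (hScard : S.card = 2 ^ n)
    (atil : Fin P → Bool) (hagree : ∀ a ∈ S, ∀ i ∈ F, a i = atil i)
    (l : List (Fin P → Bool)) (hl : l.Nodup) (hlS : l.toFinset = S) :
    (l.map (MCX P)).prod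
      = (∑ b ∈ Finset.univ.filter fun b : Fin P → Bool => ∀ i ∈ F, b i = atil i,
            ketBraProj P b) ⊗ₖ pauliX
        + (1 - ∑ b ∈ Finset.univ.filter fun b : Fin P → Bool => ∀ i ∈ F, b i = atil i,
            ketBraProj P b) ⊗ₖ 1 := by
  have hS : S = Finset.univ.filter fun b : Fin P → Bool => ∀ i ∈ F, b i = atil i := by
    refine Finset.eq_of_subset_of_card_le (fun a ha => by simpa using hagree a ha) ?_
    rw [card_subcube, hScard, hF, Nat.sub_sub_self hnP.le]
  rw [prod_map_MCX l hl, hlS, controlled_eq, ← hS]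
end
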